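/- arXiv:2505.01874 — 5 statements merged into one kernel-verified Lean document; each statement's English description precedes it below -/
import Mathlib

section
/- Let d ≥ 1 and let f : ℝ^d → ℝ be differentiable with L-Lipschitz-continuous gradient, where L ≥ 0. Then for every step size γ ≥ 0 and all vectors θ, m, δ ∈ ℝ^d, setting θ' := θ − γ(m + δ), one has f(θ') − f(θ) ≤ −(γ/2)(1 − 4γL)‖∇f(θ)‖² + γ(1 + 2γL)‖m − ∇f(θ)‖² + γ(1 + γL)‖δ‖². -/
open scoped RealInnerProductSpace

/-!
Integrating the Lipschitz bound on the gradient along a segment gives the quadratic upper bound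
`f y ≤ f x + ⟪∇f x, y - x⟫ + (L / 2) ‖y - x‖²`. Take `y = θ - γ (m + δ)` and write
`m = ∇f θ + (m - ∇f θ)`: the linear term contributes `-γ ‖∇f θ‖²` and two cross terms, of which
Young's inequality with weight `1 / 4` absorbs half of `γ ‖∇f θ‖²`, while the quadratic term is
split by `‖a + b‖² ≤ 2 (‖a‖² + ‖b‖²)`, applied twice.
-/

section QuadraticBound

variable {E F : Type*} [NormedAddCommGroup E] [NormedSpace ℝ E] [NormedAddCommGroup F]
  [NormedSpace ℝ F]

theorem norm_image_sub_sub_le_of_hasFDerivWithinAt_of_norm_sub_le {f : E → F} {f' : E → E →L[ℝ] F}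
    {s : Set E} {x y : E} {L : ℝ} (hs : Convex ℝ s)
    (hf : ∀ z ∈ s, HasFDerivWithinAt f (f' z) s z)
    (hlip : ∀ z ∈ s, ‖f' z - f' x‖ ≤ L * ‖z - x‖) (hx : x ∈ s) (hy : y ∈ s) :
    ‖f y - f x - f' x (y - x)‖ ≤ L / 2 * ‖y - x‖ ^ 2 := by
  let c : ℝ → E := AffineMap.lineMap x y
  let remainder : ℝ → F := fun t => f (c t) - f x - t • f' x (y - x)
  have c_mapsTo : Set.MapsTo c (Set.Icc 0 1) s := hs.mapsTo_lineMap hx hy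
  have hasDerivWithinAt_remainder : ∀ t ∈ Set.Icc (0 : ℝ) 1,
      HasDerivWithinAt remainder ((f' (c t) - f' x) (y - x)) (Set.Icc 0 1) t := by
    intro t ht
    have hfc : HasDerivWithinAt (f ∘ c) (f' (c t) (y - x)) (Set.Icc 0 1) t :=
      (hf (c t) (c_mapsTo ht)).comp_hasDerivWithinAt t AffineMap.hasDerivWithinAt_lineMap c_mapsTo
    exact ((hfc.sub_const (f x)).sub
      ((hasDerivWithinAt_id t _).smul_const (f' x (y - x)))).congr_deriv (by simp)
  have hasDerivAt_bound (t : ℝ) :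
      HasDerivAt (fun t => L / 2 * ‖y - x‖ ^ 2 * t ^ 2) (L * ‖y - x‖ ^ 2 * t) t :=
    ((hasDerivAt_pow 2 t).const_mul _).congr_deriv (by ring)
  have norm_deriv_le : ∀ t ∈ Set.Ico (0 : ℝ) 1,
      ‖(f' (c t) - f' x) (y - x)‖ ≤ L * ‖y - x‖ ^ 2 * t := by
    intro t ht
    have c_sub : ‖c t - x‖ = t * ‖y - x‖ := by
      simp [c, AffineMap.lineMap_apply, norm_smul, abs_of_nonneg ht.1]
    calc ‖(f' (c t) - f' x) (y - x)‖
        ≤ L * ‖c t - x‖ * ‖y - x‖ :=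
          (f' (c t) - f' x).le_of_opNorm_le (hlip _ (c_mapsTo (Set.Ico_subset_Icc_self ht))) _
      _ = L * ‖y - x‖ ^ 2 * t := by rw [c_sub]; ring
  simpa [remainder, c] using image_norm_le_of_norm_deriv_right_le_deriv_boundary
    (fun t ht => (hasDerivWithinAt_remainder t ht).continuousWithinAt)
    (fun t ht => (hasDerivWithinAt_remainder t (Set.Ico_subset_Icc_self ht)).mono_of_mem_nhdsWithin
      (Icc_mem_nhdsGE_of_mem ht))
    (by simp [remainder, c]) hasDerivAt_bound norm_deriv_le (Set.right_mem_Icc.2 zero_le_one)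

end QuadraticBound

theorem norm_add_sq_le_two_mul {E : Type*} [SeminormedAddGroup E] (a b : E) :
    ‖a + b‖ ^ 2 ≤ 2 * (‖a‖ ^ 2 + ‖b‖ ^ 2) :=
  (pow_le_pow_left₀ (norm_nonneg _) (norm_add_le a b) 2).trans add_sq_le

theorem norm_add_sq_le_norm_sq_add_norm_sub_sq {E : Type*} [SeminormedAddCommGroup E] (g m δ : E) :
    ‖m + δ‖ ^ 2 ≤ 4 * ‖g‖ ^ 2 + 4 * ‖m - g‖ ^ 2 + 2 * ‖δ‖ ^ 2 := by
  have norm_m_sq : ‖m‖ ^ 2 ≤ 2 * (‖g‖ ^ 2 + ‖m - g‖ ^ 2) := by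
    simpa using norm_add_sq_le_two_mul g (m - g)
  linarith [norm_add_sq_le_two_mul m δ]

section InnerProduct

variable {E : Type*} [SeminormedAddCommGroup E] [InnerProductSpace ℝ E]

theorem neg_real_inner_le_norm_sq_div_four_add_norm_sq (a b : E) :
    -⟪a, b⟫ ≤ ‖a‖ ^ 2 / 4 + ‖b‖ ^ 2 := by
  linarith [neg_le_of_abs_le (abs_real_inner_le_norm a b), sq_nonneg (‖a‖ / 2 - ‖b‖)]

theorem neg_real_inner_add_le_norm_sub_sq (g m δ : E) :
    -⟪g, m + δ⟫ ≤ -(1 / 2) * ‖g‖ ^ 2 + ‖m - g‖ ^ 2 + ‖δ‖ ^ 2 := by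
  have inner_split : ⟪g, m + δ⟫ = ‖g‖ ^ 2 + ⟪g, m - g⟫ + ⟪g, δ⟫ := by
    rw [inner_add_right, inner_sub_right, real_inner_self_eq_norm_sq]
    ring
  linarith [neg_real_inner_le_norm_sq_div_four_add_norm_sq g (m - g),
    neg_real_inner_le_norm_sq_div_four_add_norm_sq g δ]

end InnerProduct

section Gradient

variable {E : Type*} [NormedAddCommGroup E] [InnerProductSpace ℝ E] [CompleteSpace E]

theorem image_le_of_hasGradientWithinAt_of_norm_sub_le {f : E → ℝ} {f' : E → E} {s : Set E}
    {x y : E} {L : ℝ} (hs : Convex ℝ s) (hf : ∀ z ∈ s, HasGradientWithinAt f (f' z) s z)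
    (hlip : ∀ z ∈ s, ‖f' z - f' x‖ ≤ L * ‖z - x‖) (hx : x ∈ s) (hy : y ∈ s) :
    f y ≤ f x + ⟪f' x, y - x⟫ + L / 2 * ‖y - x‖ ^ 2 := by
  have remainder_le := norm_image_sub_sub_le_of_hasFDerivWithinAt_of_norm_sub_le hs
    (fun z hz => (hf z hz).hasFDerivWithinAt)
    (fun z hz => by rw [← map_sub, LinearIsometryEquiv.norm_map]; exact hlip z hz) hx hy
  rw [InnerProductSpace.toDual_apply_apply] at remainder_le
  linarith [Real.le_norm_self (f y - f x - ⟪f' x, y - x⟫)]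

theorem stmt_0_general {f : E → ℝ} {L γ : ℝ} {θ : E} (hL : 0 ≤ L) (hdiff : Differentiable ℝ f)
    (hlip : ∀ x, ‖gradient f x - gradient f θ‖ ≤ L * ‖x - θ‖) (hγ : 0 ≤ γ) (m δ : E) :
    f (θ - γ • (m + δ)) - f θ ≤
      -(γ / 2) * (1 - 4 * γ * L) * ‖gradient f θ‖ ^ 2
        + γ * (1 + 2 * γ * L) * ‖m - gradient f θ‖ ^ 2
        + γ * (1 + γ * L) * ‖δ‖ ^ 2 := by
  set g := gradient f θ
  have quadratic_bound : f (θ - γ • (m + δ)) ≤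
      f θ + ⟪g, θ - γ • (m + δ) - θ⟫ + L / 2 * ‖θ - γ • (m + δ) - θ‖ ^ 2 :=
    image_le_of_hasGradientWithinAt_of_norm_sub_le convex_univ
      (fun z _ => hasGradientWithinAt_univ.2 (hdiff z).hasGradientAt) (fun z _ => hlip z)
      (Set.mem_univ θ) (Set.mem_univ _)
  rw [sub_sub_cancel_left, inner_neg_right, real_inner_smul_right, norm_neg, norm_smul, mul_pow,
    Real.norm_of_nonneg hγ] at quadratic_bound
  calc f (θ - γ • (m + δ)) - f θ
      ≤ γ * -⟪g, m + δ⟫ + L / 2 * γ ^ 2 * ‖m + δ‖ ^ 2 := by linarith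
    _ ≤ γ * (-(1 / 2) * ‖g‖ ^ 2 + ‖m - g‖ ^ 2 + ‖δ‖ ^ 2)
          + L / 2 * γ ^ 2 * (4 * ‖g‖ ^ 2 + 4 * ‖m - g‖ ^ 2 + 2 * ‖δ‖ ^ 2) := by
        gcongr
        · exact neg_real_inner_add_le_norm_sub_sq g m δ
        · exact norm_add_sq_le_norm_sq_add_norm_sub_sq g m δ
    _ = _ := by ring

end Gradient

/-- Descent bound (Lemma "descent" of the CafCor analysis): one step of momentum SGD with
perturbation `δ` on an `L`-smooth function. -/
theorem stmt_0 (d : ℕ) (hd : 1 ≤ d) (f : EuclideanSpace ℝ (Fin d) → ℝ) (L : ℝ) (hL : 0 ≤ L)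
    (hdiff : Differentiable ℝ f)
    (hlip : ∀ x y : EuclideanSpace ℝ (Fin d), ‖gradient f x - gradient f y‖ ≤ L * ‖x - y‖)
    (γ : ℝ) (hγ : 0 ≤ γ) (θ m δ : EuclideanSpace ℝ (Fin d)) :
    f (θ - γ • (m + δ)) - f θ ≤
      -(γ / 2) * (1 - 4 * γ * L) * ‖gradient f θ‖ ^ 2
        + γ * (1 + 2 * γ * L) * ‖m - gradient f θ‖ ^ 2
        + γ * (1 + γ * L) * ‖δ‖ ^ 2 :=
  stmt_0_general hL hdiff (fun x => hlip x θ) hγ m δ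
end

section
/- Let d ≥ 1, let M be a random real symmetric d × d matrix that is almost surely positive semidefinite, and let g : ℝ → ℝ be a nonnegative, nondecreasing, measurable function. Then E[ sup_{‖v‖ ≤ 1} g(⟨v, Mv⟩) ] ≤ 9^d · sup_{‖v‖ ≤ 1} E[ g(2⟨v, Mv⟩) ], where both sides are interpreted as values in [0, ∞]. -/
open MeasureTheory
open scoped RealInnerProductSpace ENNReal

noncomputable instance (d : ℕ) : MeasurableSpace (Matrix (Fin d) (Fin d) ℝ) :=
  show MeasurableSpace (Fin d → Fin d → ℝ) from inferInstance

/-!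
Let `u` belong to an `ε`-net of the unit ball and lie within `ε` of a maximizer `v` of a
nonnegative quadratic form `Q`. Since `v = (1 - ε) • (u / (1 - ε)) + ε • ((v - u) / ε)` and
`(v - u) / ε` is in the unit ball, convexity of `Q` gives `(1 - ε)² Q v ≤ Q u`. For `ε = 1/4` this
yields `sup Q ≤ 2 max_{u ∈ net} Q u`, hence `sup g(Q) ≤ ∑_{u ∈ net} g(2 Q u)`. Comparing volumes,
the net can be chosen with at most `(1 + 2/ε) ^ d = 9 ^ d` points.
-/

section CoveringNumber

open Metric Module
open scoped NNReal

variable {E : Type*} [NormedAddCommGroup E] [NormedSpace ℝ E] [FiniteDimensional ℝ E]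
  {ε : ℝ≥0}

theorem card_mul_pow_le_of_pairwiseDisjoint_ball {s : Finset E} {x : E} {δ ρ : ℝ} (hδ : 0 < δ)
    (hρ : 0 < ρ) (hdisj : (s : Set E).PairwiseDisjoint (ball · δ))
    (hsub : ∀ c ∈ s, ball c δ ⊆ ball x ρ) :
    s.card * δ ^ finrank ℝ E ≤ ρ ^ finrank ℝ E := by
  borelize E
  let μ : Measure E := Measure.addHaar
  have hvol : ENNReal.ofReal (s.card * δ ^ finrank ℝ E) * μ (ball 0 1) ≤
      ENNReal.ofReal (ρ ^ finrank ℝ E) * μ (ball 0 1) :=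
    calc
      _ = ∑ c ∈ s, μ (ball c δ) := by
        simp [μ.addHaar_ball_of_pos _ hδ, ENNReal.ofReal_mul, mul_assoc]
      _ = μ (⋃ c ∈ s, ball c δ) :=
        (measure_biUnion_finset hdisj fun _ _ => measurableSet_ball).symm
      _ ≤ μ (ball x ρ) := measure_mono (Set.iUnion₂_subset hsub)
      _ = _ := μ.addHaar_ball_of_pos x hρ
  rwa [ENNReal.mul_le_mul_iff_left (measure_ball_pos μ _ one_pos).ne' measure_ball_lt_top.ne,
    ENNReal.ofReal_le_ofReal_iff (by positivity)] at hvol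

theorem card_le_of_isSeparated_of_subset_closedBall (hε : 0 < ε) {s : Finset E} {x : E} {r : ℝ≥0}
    (hsub : (s : Set E) ⊆ closedBall x r) (hsep : IsSeparated ε (s : Set E)) :
    (s.card : ℝ) ≤ (1 + 2 * r / ε) ^ finrank ℝ E := by
  have hδ : 0 < (ε : ℝ) / 2 := by positivity
  have hvol : s.card * ((ε : ℝ) / 2) ^ finrank ℝ E ≤ (r + ε / 2 : ℝ) ^ finrank ℝ E := by
    refine card_mul_pow_le_of_pairwiseDisjoint_ball (x := x) hδ (by positivity) ?_ ?_
    · intro c hc c' hc' hcc'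
      refine ball_disjoint_ball ?_
      have hlt : (ε : ℝ≥0∞) < edist c c' := hsep hc hc' hcc'
      rw [edist_nndist, ENNReal.coe_lt_coe] at hlt
      rw [add_halves]
      exact_mod_cast hlt.le
    · intro c hc
      refine ball_subset_ball' ?_
      linarith [mem_closedBall.1 (hsub hc)]
  rw [← le_div_iff₀ (by positivity), ← div_pow] at hvol
  have hratio : (r + ε / 2 : ℝ) / (ε / 2) = 1 + 2 * r / ε := by
    field_simp
    ring
  rwa [hratio] at hvol

theorem packingNumber_closedBall_le (hε : 0 < ε) (x : E) (r : ℝ≥0) :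
    packingNumber ε (closedBall x r) ≤ (⌊(1 + 2 * r / ε : ℝ) ^ finrank ℝ E⌋₊ : ℕ∞) := by
  refine iSup₂_le fun C hC => iSup_le fun hsep => ?_
  by_contra! hlt
  obtain ⟨t, htC, ht⟩ := Set.exists_subset_encard_eq (Order.add_one_le_of_lt hlt)
  have htfin : t.Finite := Set.finite_of_encard_eq_coe (by exact_mod_cast ht)
  lift t to Finset E using htfin
  have hcard := Nat.le_floor <| card_le_of_isSeparated_of_subset_closedBall hε
    (htC.trans hC) (hsep.subset htC)
  rw [Set.encard_coe_eq_coe_finsetCard] at ht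
  have : t.card = ⌊(1 + 2 * r / ε : ℝ) ^ finrank ℝ E⌋₊ + 1 := by exact_mod_cast ht
  omega

theorem exists_finset_isCover_closedBall_card_le (hε : 0 < ε) (x : E) (r : ℝ≥0) :
    ∃ N : Finset E, (N : Set E) ⊆ closedBall x r ∧ IsCover ε (closedBall x r) (N : Set E) ∧
      (N.card : ℝ) ≤ (1 + 2 * r / ε) ^ finrank ℝ E := by
  have hcover := (coveringNumber_le_packingNumber ε _).trans (packingNumber_closedBall_le hε x r)
  obtain ⟨N, hsub, hfin, hN, hcard⟩ := exists_set_encard_eq_coveringNumber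
    (ne_top_of_le_ne_top (ENat.natCast_ne_top _) hcover)
  lift N to Finset E using hfin
  rw [← hcard, Set.encard_coe_eq_coe_finsetCard, Nat.cast_le] at hcover
  exact ⟨N, hsub, hN, (Nat.le_floor_iff (by positivity)).1 hcover⟩

end CoveringNumber

section QuadraticForm

open Metric
open scoped NNReal

theorem convexOn_univ_quadraticForm {R V : Type*} [CommRing R] [LinearOrder R]
    [IsStrictOrderedRing R] [AddCommGroup V] [Module R V] {Q : QuadraticForm R V}
    (hQ : ∀ x, 0 ≤ Q x) : ConvexOn R Set.univ Q := by
  refine ⟨convex_univ, fun x _ y _ a b ha hb hab => ?_⟩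
  have hdiff : a * Q x + b * Q y - Q (a • x + b • y) = a * b * Q (x - y) := by
    obtain rfl : b = 1 - a := by linarith
    simp only [sub_eq_add_neg x, QuadraticMap.map_add Q, QuadraticMap.map_smul,
      QuadraticMap.map_neg, QuadraticMap.polar_smul_left, QuadraticMap.polar_smul_right,
      QuadraticMap.polar_neg_right, smul_eq_mul]
    ring
  have := mul_nonneg (mul_nonneg ha hb) (hQ (x - y))
  simp only [smul_eq_mul]
  linarith

variable {E : Type*} [NormedAddCommGroup E] [NormedSpace ℝ E] {Q : QuadraticForm ℝ E}

theorem continuous_quadraticForm [FiniteDimensional ℝ E] (Q : QuadraticForm ℝ E) :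
    Continuous Q := by
  let B := LinearMap.toContinuousBilinearMap (QuadraticMap.associated Q)
  have hB : Continuous fun x => B x x := by fun_prop
  simpa only [B, LinearMap.toContinuousBilinearMap_apply,
    QuadraticMap.associated_eq_self_apply] using hB

theorem one_sub_sq_mul_le_of_isMaxOn_closedBall (hQ : ∀ x, 0 ≤ Q x) {u v : E}
    (hv : IsMaxOn Q (closedBall 0 1) v) {ε : ℝ} (hε : 0 < ε) (hε1 : ε < 1) (huv : dist v u ≤ ε) :
    (1 - ε) ^ 2 * Q v ≤ Q u := by
  have hone_sub : 0 < 1 - ε := sub_pos.2 hε1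
  have hball : ε⁻¹ • (v - u) ∈ closedBall (0 : E) 1 := by
    rwa [mem_closedBall_zero_iff, norm_smul, Real.norm_of_nonneg (by positivity), ← dist_eq_norm,
      inv_mul_le_one₀ hε]
  have hcomb : (1 - ε) • (1 - ε)⁻¹ • u + ε • ε⁻¹ • (v - u) = v := by
    rw [smul_inv_smul₀ hone_sub.ne', smul_inv_smul₀ hε.ne', add_sub_cancel]
  have hconv : Q v ≤ (1 - ε) * ((1 - ε)⁻¹ * (1 - ε)⁻¹ * Q u) + ε * Q v :=
    calc
      Q v = Q ((1 - ε) • (1 - ε)⁻¹ • u + ε • ε⁻¹ • (v - u)) := by rw [hcomb]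
      _ ≤ (1 - ε) * Q ((1 - ε)⁻¹ • u) + ε * Q (ε⁻¹ • (v - u)) :=
        (convexOn_univ_quadraticForm hQ).2 trivial trivial hone_sub.le hε.le (by ring)
      _ ≤ _ := by
        rw [QuadraticMap.map_smul, smul_eq_mul]
        gcongr
        exact hv hball
  rw [mul_assoc, mul_inv_cancel_left₀ hone_sub.ne', inv_mul_eq_div, ← sub_le_iff_le_add,
    ← one_sub_mul, le_div_iff₀ hone_sub] at hconv
  linarith

theorem exists_mem_forall_one_sub_sq_mul_le_of_isCover [FiniteDimensional ℝ E]
    (hQ : ∀ x, 0 ≤ Q x) {ε : ℝ≥0} (hε : 0 < ε) (hε1 : ε < 1) {N : Set E}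
    (hN : IsCover ε (closedBall 0 1) N) :
    ∃ u ∈ N, ∀ v ∈ closedBall (0 : E) 1, (1 - ε : ℝ) ^ 2 * Q v ≤ Q u := by
  obtain ⟨v, hv, hmax⟩ := (isCompact_closedBall (0 : E) 1).exists_isMaxOn
    (nonempty_closedBall.2 zero_le_one) (continuous_quadraticForm Q).continuousOn
  obtain ⟨u, hu, huv⟩ := hN hv
  have hdist : dist v u ≤ ε := by
    have hedist : edist v u ≤ ε := huv
    rwa [edist_nndist, ENNReal.coe_le_coe, ← NNReal.coe_le_coe, coe_nndist] at hedist
  refine ⟨u, hu, fun w hw => ?_⟩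
  calc
    (1 - ε : ℝ) ^ 2 * Q w ≤ (1 - ε : ℝ) ^ 2 * Q v :=
      mul_le_mul_of_nonneg_left (hmax hw) (sq_nonneg _)
    _ ≤ Q u :=
      one_sub_sq_mul_le_of_isMaxOn_closedBall hQ hmax hε (by exact_mod_cast hε1) hdist

end QuadraticForm

theorem lintegral_iSup_le_card_mul_iSup_lintegral {Ω ι κ : Type*} [MeasurableSpace Ω]
    {μ : Measure Ω} {f : ι → Ω → ℝ≥0∞} {h : κ → Ω → ℝ≥0∞} (N : Finset κ)
    (hmeas : ∀ u ∈ N, AEMeasurable (h u) μ)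
    (hle : ∀ᵐ ω ∂μ, ∀ v, ∃ u ∈ N, f v ω ≤ h u ω) :
    ∫⁻ ω, ⨆ v, f v ω ∂μ ≤ N.card * ⨆ u ∈ N, ∫⁻ ω, h u ω ∂μ :=
  calc
    ∫⁻ ω, ⨆ v, f v ω ∂μ ≤ ∫⁻ ω, ∑ u ∈ N, h u ω ∂μ := by
      refine lintegral_mono_ae ?_
      filter_upwards [hle] with ω hω
      refine iSup_le fun v => ?_
      obtain ⟨u, hu, hvu⟩ := hω v
      exact hvu.trans (Finset.single_le_sum_of_canonicallyOrdered (f := (h · ω)) hu)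
    _ = ∑ u ∈ N, ∫⁻ ω, h u ω ∂μ := lintegral_finsetSum' _ hmeas
    _ ≤ N.card • ⨆ u ∈ N, ∫⁻ ω, h u ω ∂μ :=
      Finset.sum_le_card_nsmul _ _ _ fun u hu => le_iSup₂ (f := fun u _ => ∫⁻ ω, h u ω ∂μ) u hu
    _ = _ := nsmul_eq_mul _ _

/-- The quadratic form `x ↦ ⟪x, A x⟫` of a real square matrix `A` on Euclidean space;
it makes the results on nonnegative quadratic forms available for matrices. -/
noncomputable def matrixQuadraticForm {n : Type*} [Fintype n] [DecidableEq n] (A : Matrix n n ℝ) :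
    QuadraticForm ℝ (EuclideanSpace ℝ n) :=
  LinearMap.BilinMap.toQuadraticMap
    ((innerₗ (EuclideanSpace ℝ n)).compl₂ (Matrix.toEuclideanLin A))

namespace matrixQuadraticForm

theorem nonneg {n : Type*} [Fintype n] [DecidableEq n] {A : Matrix n n ℝ} (hA : A.PosSemidef)
    (x : EuclideanSpace ℝ n) : 0 ≤ matrixQuadraticForm A x :=
  (Matrix.isPositive_toEuclideanLin_iff.2 hA).inner_nonneg_right x

theorem measurable_apply {d : ℕ} (x : EuclideanSpace ℝ (Fin d)) :
    Measurable fun A : Matrix (Fin d) (Fin d) ℝ => matrixQuadraticForm A x := by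
  have hsum (A : Matrix (Fin d) (Fin d) ℝ) :
      matrixQuadraticForm A x = ∑ i, (∑ j, A i j * x j) * x i := by
    simp [matrixQuadraticForm, PiLp.inner_apply, Matrix.mulVec, dotProduct]
  simp only [hsum]
  fun_prop

end matrixQuadraticForm

theorem stmt_2_general {Ω E : Type*} [MeasurableSpace Ω] (μ : Measure Ω)
    [NormedAddCommGroup E] [NormedSpace ℝ E] [FiniteDimensional ℝ E]
    (Q : Ω → QuadraticForm ℝ E) (hQmeas : ∀ v, AEMeasurable (fun ω => Q ω v) μ)
    (hQ : ∀ᵐ ω ∂μ, ∀ v, 0 ≤ Q ω v) (g : ℝ → ℝ≥0∞) (hg : Monotone g) :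
    ∫⁻ ω, ⨆ v : Metric.closedBall (0 : E) 1, g (Q ω v) ∂μ
      ≤ 9 ^ Module.finrank ℝ E *
        ⨆ v : Metric.closedBall (0 : E) 1, ∫⁻ ω, g (2 * Q ω v) ∂μ := by
  obtain ⟨N, hsub, hcover, hcard⟩ :=
    exists_finset_isCover_closedBall_card_le (ε := 1 / 4) (by norm_num) (0 : E) 1
  have hle : ∀ᵐ ω ∂μ, ∀ v : Metric.closedBall (0 : E) 1, ∃ u ∈ N, g (Q ω v) ≤ g (2 * Q ω u) := by
    filter_upwards [hQ] with ω hω v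
    obtain ⟨u, hu, hmax⟩ := exists_mem_forall_one_sub_sq_mul_le_of_isCover hω (by norm_num)
      (NNReal.div_lt_one_of_lt (by norm_num)) hcover
    have hconst : (1 - (1 / 4 : NNReal) : ℝ) ^ 2 = 9 / 16 := by norm_num
    have hvu : 9 / 16 * Q ω v ≤ Q ω u := hconst ▸ hmax v v.2
    exact ⟨u, hu, hg (by linarith [hω v])⟩
  have hcard9 : (N.card : ℝ≥0∞) ≤ 9 ^ Module.finrank ℝ E := by
    have hbase : (1 + 2 * (1 : NNReal) / (1 / 4 : NNReal) : ℝ) = 9 := by norm_num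
    rw [hbase] at hcard
    exact_mod_cast hcard
  calc
    _ ≤ N.card * ⨆ u ∈ N, ∫⁻ ω, g (2 * Q ω u) ∂μ :=
      lintegral_iSup_le_card_mul_iSup_lintegral N
        (fun u _ => hg.measurable.comp_aemeasurable ((hQmeas u).const_mul 2)) hle
    _ ≤ _ := by
      gcongr
      exact iSup₂_le fun u hu => le_iSup_of_le ⟨u, hsub hu⟩ le_rfl

/-- Covering argument for expected suprema of quadratic forms of a random symmetric
(almost surely positive semidefinite) matrix, composed with a nonnegative nondecreasing
function `g` (values interpreted in `[0, ∞]`). -/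
theorem stmt_2 {Ω : Type*} [MeasurableSpace Ω] (P : Measure Ω) [IsProbabilityMeasure P]
    (d : ℕ) (hd : 1 ≤ d) (M : Ω → Matrix (Fin d) (Fin d) ℝ) (hMmeas : Measurable M)
    (hpsd : ∀ᵐ ω ∂P, (M ω).PosSemidef)
    (g : ℝ → ℝ) (hg0 : ∀ x, 0 ≤ g x) (hgmono : Monotone g) (hgmeas : Measurable g) :
    (∫⁻ ω, ⨆ v : Metric.closedBall (0 : EuclideanSpace ℝ (Fin d)) 1,
        ENNReal.ofReal
          (g ⟪(v : EuclideanSpace ℝ (Fin d)), Matrix.toEuclideanLin (M ω) v⟫) ∂P)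
      ≤ (9 : ℝ≥0∞) ^ d *
        ⨆ v : Metric.closedBall (0 : EuclideanSpace ℝ (Fin d)) 1,
          ∫⁻ ω, ENNReal.ofReal
            (g (2 * ⟪(v : EuclideanSpace ℝ (Fin d)), Matrix.toEuclideanLin (M ω) v⟫)) ∂P := by
  simpa only [finrank_euclideanSpace_fin] using!
    stmt_2_general P (matrixQuadraticForm <| M ·)
      (fun v => ((matrixQuadraticForm.measurable_apply v).comp hMmeas).aemeasurable)
      (hpsd.mono fun _ h => matrixQuadraticForm.nonneg h) _ (ENNReal.ofReal_mono.comp hgmono)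
end

section
/- Let n, f, q be integers with n > f ≥ q ≥ 0, let σ_cor, σ_ind ≥ 0 with b := (f − q) σ_cor² + σ_ind² > 0, and set a := (n − q) σ_cor² + σ_ind² and m := n − f. Then the m × m matrix Σ := a I_m − σ_cor² J_m is symmetric positive definite, and for every standard basis vector e_i of ℝ^m and every real C, (2C e_i)ᵀ Σ^{-1} (2C e_i) = (4C²/a) (1 + σ_cor²/b). -/
open scoped Matrix

/-!
The matrix `a I - c J` of size `m` acts as `a` on the vectors of sum zero and as `b = a - m c` on
the constant vectors. It is therefore positive definite as soon as `a` and `b` are positive, and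
since `J² = m J`, its inverse is again a combination of `I` and `J`, namely `a⁻¹ (I + (c / b) J)`.
The claim reads off a diagonal entry of this inverse, with `c = σ_cor²`.
-/

section AllOnes

variable (ι R : Type*)

/-- The square all-ones matrix `J` indexed by `ι`. It is reducible, so that it can be used
interchangeably with its expression as `Matrix.of`. -/
abbrev allOnes [One R] : Matrix ι ι R := Matrix.of fun _ _ => 1

variable {ι R} [Fintype ι]

theorem allOnes_mul_allOnes [NonAssocSemiring R] :
    allOnes ι R * allOnes ι R = (Fintype.card ι : R) • allOnes ι R := by
  ext i j
  simp [Matrix.mul_apply]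

theorem dotProduct_allOnes_mulVec [NonAssocSemiring R] (x y : ι → R) :
    x ⬝ᵥ allOnes ι R *ᵥ y = (∑ i, x i) * ∑ i, y i := by
  simp [dotProduct, Matrix.mulVec, Finset.sum_mul]

end AllOnes

theorem mul_sq_sum_lt_mul_dotProduct_self {ι : Type*} [Fintype ι] {a c : ℝ} (ha : 0 < a)
    (hca : c * Fintype.card ι < a) {x : ι → ℝ} (hx : x ≠ 0) :
    c * (∑ i, x i) ^ 2 < a * (x ⬝ᵥ x) := by
  have self_pos : 0 < x ⬝ᵥ x := by simpa using Matrix.dotProduct_star_self_pos_iff.mpr hx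
  have cauchy_schwarz : (∑ i, x i) ^ 2 ≤ Fintype.card ι * (x ⬝ᵥ x) := by
    simpa [dotProduct, sq] using sq_sum_le_card_mul_sum_sq (s := Finset.univ) (f := x)
  rcases le_total c 0 with hc | hc
  · calc
      c * (∑ i, x i) ^ 2 ≤ 0 := mul_nonpos_of_nonpos_of_nonneg hc (sq_nonneg _)
      _ < a * (x ⬝ᵥ x) := mul_pos ha self_pos
  · calc
      c * (∑ i, x i) ^ 2 ≤ c * (Fintype.card ι * (x ⬝ᵥ x)) := by gcongr
      _ = c * Fintype.card ι * (x ⬝ᵥ x) := (mul_assoc ..).symm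
      _ < a * (x ⬝ᵥ x) := by gcongr

section ScalarSubAllOnes

variable {ι : Type*} [DecidableEq ι]

theorem isHermitian_smul_one_sub_smul_allOnes {R : Type*} [Ring R] [StarRing R] [TrivialStar R]
    (a c : R) : (a • (1 : Matrix ι ι R) - c • allOnes ι R).IsHermitian := by
  ext i j
  simp [Matrix.one_apply, eq_comm]

variable [Fintype ι]

theorem dotProduct_smul_one_sub_smul_allOnes_mulVec {R : Type*} [CommRing R] (a c : R)
    (x y : ι → R) :
    x ⬝ᵥ (a • (1 : Matrix ι ι R) - c • allOnes ι R) *ᵥ y =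
      a * (x ⬝ᵥ y) - c * ((∑ i, x i) * ∑ i, y i) := by
  rw [Matrix.sub_mulVec, Matrix.smul_mulVec, Matrix.smul_mulVec, Matrix.one_mulVec,
    dotProduct_sub, dotProduct_smul, dotProduct_smul, dotProduct_allOnes_mulVec,
    smul_eq_mul, smul_eq_mul]

theorem inv_smul_one_sub_smul_allOnes {K : Type*} [Field K] {a c : K} (ha : a ≠ 0)
    (hb : a - c * Fintype.card ι ≠ 0) :
    (a • (1 : Matrix ι ι K) - c • allOnes ι K)⁻¹ =
      a⁻¹ • (1 + (c / (a - c * Fintype.card ι)) • allOnes ι K) := by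
  apply Matrix.inv_eq_right_inv
  simp only [sub_mul, mul_add, smul_add, smul_mul_assoc, mul_smul_comm, one_mul, mul_one,
    allOnes_mul_allOnes]
  match_scalars
  · field_simp
  · field_simp
    ring

theorem posDef_smul_one_sub_smul_allOnes {a c : ℝ} (ha : 0 < a)
    (hca : c * Fintype.card ι < a) :
    (a • (1 : Matrix ι ι ℝ) - c • allOnes ι ℝ).PosDef := by
  refine .of_dotProduct_mulVec_pos (isHermitian_smul_one_sub_smul_allOnes a c) fun x hx => ?_
  rw [star_trivial, dotProduct_smul_one_sub_smul_allOnes_mulVec, ← sq, sub_pos]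
  exact mul_sq_sum_lt_mul_dotProduct_self ha hca hx

theorem stmt_11_general {a b c : ℝ} (ha : 0 < a) (hb : 0 < b)
    (hab : a - c * Fintype.card ι = b) :
    (a • (1 : Matrix ι ι ℝ) - c • allOnes ι ℝ).PosDef ∧
      ∀ (i : ι) (C : ℝ),
        ((2 * C) • Pi.single i (1 : ℝ)) ⬝ᵥ
            (a • (1 : Matrix ι ι ℝ) - c • allOnes ι ℝ)⁻¹ *ᵥ ((2 * C) • Pi.single i (1 : ℝ)) =
          4 * C ^ 2 / a * (1 + c / b) := by
  subst hab
  refine ⟨posDef_smul_one_sub_smul_allOnes ha (sub_pos.mp hb), fun i C => ?_⟩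
  have inv_diag : (a • (1 : Matrix ι ι ℝ) - c • allOnes ι ℝ)⁻¹ i i =
      a⁻¹ * (1 + c / (a - c * Fintype.card ι)) := by
    rw [inv_smul_one_sub_smul_allOnes ha.ne' hb.ne']
    simp
  rw [Matrix.mulVec_smul, dotProduct_smul, smul_dotProduct, single_one_dotProduct,
    Matrix.mulVec_single_one, Matrix.col_apply, inv_diag, smul_eq_mul, smul_eq_mul]
  ring

end ScalarSubAllOnes

/-- The covariance matrix `Σ = a I_m − σ_cor² J_m` of the correlated-noise scheme (with
`a = (n − q) σ_cor² + σ_ind²`, `b = (f − q) σ_cor² + σ_ind² > 0`, `m = n − f`) is symmetric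
positive definite, and the quadratic form of its inverse at `2C e_i` equals
`(4C²/a)(1 + σ_cor²/b)`. -/
theorem stmt_11 (n f q : ℕ) (hqf : q ≤ f) (hfn : f < n)
    (σcor σind : ℝ) (hσcor : 0 ≤ σcor) (hσind : 0 ≤ σind)
    (hb : 0 < ((f : ℝ) - q) * σcor ^ 2 + σind ^ 2)
    (Sig : Matrix (Fin (n - f)) (Fin (n - f)) ℝ)
    (hSig : Sig = (((n : ℝ) - q) * σcor ^ 2 + σind ^ 2) • (1 : Matrix (Fin (n - f)) (Fin (n - f)) ℝ)
        - (σcor ^ 2) • Matrix.of (fun _ _ => (1 : ℝ))) :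
    Sig.PosDef ∧
      ∀ (i : Fin (n - f)) (C : ℝ),
        (fun j => (2 * C) * (Pi.single i (1 : ℝ) : Fin (n - f) → ℝ) j) ⬝ᵥ
            (Sig⁻¹).mulVec (fun j => (2 * C) * (Pi.single i (1 : ℝ) : Fin (n - f) → ℝ) j)
          = (4 * C ^ 2 / (((n : ℝ) - q) * σcor ^ 2 + σind ^ 2))
              * (1 + σcor ^ 2 / (((f : ℝ) - q) * σcor ^ 2 + σind ^ 2)) := by
  have hab : ((n : ℝ) - q) * σcor ^ 2 + σind ^ 2 - σcor ^ 2 * Fintype.card (Fin (n - f)) =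
      ((f : ℝ) - q) * σcor ^ 2 + σind ^ 2 := by
    rw [Fintype.card_fin, Nat.cast_sub hfn.le]
    ring
  have ha : 0 < ((n : ℝ) - q) * σcor ^ 2 + σind ^ 2 :=
    (hab ▸ hb).trans_le (sub_le_self _ (by positivity))
  exact hSig ▸ stmt_11_general ha hb hab
end

section
/- Fix reals L > 0, κ ≥ 0, P ≥ 0, Q ≥ 0, G ≥ 0, a step size γ with 0 < γ ≤ 1/(24L), and set β := 1 − 24Lγ. Suppose nonnegative reals u, v, w, G₀ (current values) and u', v', w' (next values) satisfy: (R1) u' ≤ u − (γ/2)(1 − 4γL) G₀ + γ(1 + 2γL) v + γ(1 + γL) κ w; (R2) v' ≤ β²(1 + γL)(1 + 4γL) v + 4γL(1 + γL) β² G₀ + (1 − β)² P + 2γL(1 + γL) β² κ w; (R3) w' ≤ β w + 2(1 − β)² Q + (1 − β) G². Then, with V := u + v/(16L) + 2κw/L and V' := u' + v'/(16L) + 2κw'/L, one has V' − V ≤ −(γ/10) G₀ − (γ/16) v − 12 κ γ w + 576 L γ² (P/16 + 4κQ) + 48 κ γ G². -/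
/-!
Adding (R1), (R2) / (16L) and (2κ / L) (R3) bounds the change of the Lyapunov function by a linear
form in `G₀`, `v`, `w` plus noise. Up to scaling by `γ`, `1 / (16L)` and `κγ` respectively, its
coefficients are polynomials in the single dimensionless number `x = γL ∈ [0, 1/24]`.
Since `0 ≤ β = 1 - 24x ≤ 1`, one may replace `β ^ 2` by `β` in the coefficients of `G₀` and `v`,
where the term `-24x` then dominates, and by `1` in that of `w`, where the contraction of (R3)
contributes `-48κγ`.
-/

section

variable {K : Type*} [Field K]

/-- The Lyapunov function of the CafCor analysis, combining the objective gap `u`, the momentum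
deviation `v` and the momentum drift `w`. -/
def lyapunov (L κ u v w : K) : K := u + v / (16 * L) + 2 * κ * w / L

variable [LinearOrder K] [IsStrictOrderedRing K]

theorem lyapunov_sub_le_of_recursions {L κ P Q H γ β u v w G₀ u' v' w' : K}
    (hL : 0 < L) (hκ : 0 ≤ κ)
    (hdescent : u' ≤ u - (γ / 2) * (1 - 4 * γ * L) * G₀ + γ * (1 + 2 * γ * L) * v
      + γ * (1 + γ * L) * κ * w)
    (hdeviation : v' ≤ β ^ 2 * (1 + γ * L) * (1 + 4 * γ * L) * v
      + 4 * γ * L * (1 + γ * L) * β ^ 2 * G₀ + (1 - β) ^ 2 * P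
      + 2 * γ * L * (1 + γ * L) * β ^ 2 * κ * w)
    (hdrift : w' ≤ β * w + 2 * (1 - β) ^ 2 * Q + (1 - β) * H) :
    lyapunov L κ u' v' w' - lyapunov L κ u v w ≤
      γ * ((1 + γ * L) * β ^ 2 / 4 - (1 - 4 * (γ * L)) / 2) * G₀
        + (16 * (γ * L) * (1 + 2 * (γ * L)) + β ^ 2 * (1 + γ * L) * (1 + 4 * (γ * L)) - 1)
          / (16 * L) * v
        + κ * (γ * ((1 + γ * L) * (1 + β ^ 2 / 8)) - 2 * (1 - β) / L) * w
        + (1 - β) ^ 2 / L * (P / 16 + 4 * κ * Q) + 2 * κ * (1 - β) / L * H := by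
  have hsum := add_le_add (add_le_add hdescent
    (div_le_div_of_nonneg_right hdeviation (by positivity : 0 ≤ 16 * L)))
    (mul_le_mul_of_nonneg_left hdrift (by positivity : 0 ≤ 2 * κ / L))
  calc lyapunov L κ u' v' w' - lyapunov L κ u v w
      = u' + v' / (16 * L) + 2 * κ / L * w' - lyapunov L κ u v w := by unfold lyapunov; ring
    _ ≤ _ := sub_le_sub_right hsum _
    _ = _ := by unfold lyapunov; field_simp; ring

variable {x : K}

theorem gradient_coeff_le (hx₀ : 0 ≤ x) (hx : x ≤ 1 / 24) :
    (1 + x) * (1 - 24 * x) ^ 2 / 4 - (1 - 4 * x) / 2 ≤ -(1 / 4) :=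
  calc (1 + x) * (1 - 24 * x) ^ 2 / 4 - (1 - 4 * x) / 2
      ≤ (1 + x) * (1 - 24 * x) / 4 - (1 - 4 * x) / 2 := by
        gcongr
        exact pow_le_of_le_one (by linarith) (by linarith) two_ne_zero
    _ = -(1 / 4) - (15 / 4 * x + 6 * x ^ 2) := by ring
    _ ≤ -(1 / 4) := sub_le_self _ (by positivity)

theorem deviation_coeff_le (hx₀ : 0 ≤ x) (hx : x ≤ 1 / 24) :
    16 * x * (1 + 2 * x) + (1 - 24 * x) ^ 2 * (1 + x) * (1 + 4 * x) - 1 ≤ -(3 * x) :=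
  calc 16 * x * (1 + 2 * x) + (1 - 24 * x) ^ 2 * (1 + x) * (1 + 4 * x) - 1
      ≤ 16 * x * (1 + 2 * x) + (1 - 24 * x) * (1 + x) * (1 + 4 * x) - 1 := by
        gcongr
        exact pow_le_of_le_one (by linarith) (by linarith) two_ne_zero
    _ = -(3 * x) - (84 * x ^ 2 + 96 * x ^ 3) := by ring
    _ ≤ -(3 * x) := sub_le_self _ (by positivity)

theorem drift_coeff_le (hx₀ : 0 ≤ x) (hx : x ≤ 1 / 24) :
    (1 + x) * (1 + (1 - 24 * x) ^ 2 / 8) ≤ 2 := by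
  have hsq : (1 - 24 * x) ^ 2 ≤ 1 := pow_le_one₀ (by linarith) (by linarith)
  calc (1 + x) * (1 + (1 - 24 * x) ^ 2 / 8) ≤ (1 + 1 / 24) * (1 + 1 / 8) := by gcongr
    _ ≤ 2 := by norm_num

theorem stmt_14_general {L κ P Q G γ β u v w G₀ u' v' w' : K} (hL : 0 < L) (hκ : 0 ≤ κ)
    (hγ₀ : 0 ≤ γ) (hγ : γ ≤ 1 / (24 * L)) (hβ : β = 1 - 24 * L * γ)
    (hv : 0 ≤ v) (hw : 0 ≤ w) (hG₀ : 0 ≤ G₀)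
    (hdescent : u' ≤ u - (γ / 2) * (1 - 4 * γ * L) * G₀ + γ * (1 + 2 * γ * L) * v
      + γ * (1 + γ * L) * κ * w)
    (hdeviation : v' ≤ β ^ 2 * (1 + γ * L) * (1 + 4 * γ * L) * v
      + 4 * γ * L * (1 + γ * L) * β ^ 2 * G₀ + (1 - β) ^ 2 * P
      + 2 * γ * L * (1 + γ * L) * β ^ 2 * κ * w)
    (hdrift : w' ≤ β * w + 2 * (1 - β) ^ 2 * Q + (1 - β) * G ^ 2) :
    lyapunov L κ u' v' w' - lyapunov L κ u v w ≤
      -(γ / 4) * G₀ - (3 * γ / 16) * v - 46 * κ * γ * w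
        + 576 * L * γ ^ 2 * (P / 16 + 4 * κ * Q) + 48 * κ * γ * G ^ 2 := by
  have hx₀ : 0 ≤ γ * L := by positivity
  have hx : γ * L ≤ 1 / 24 := by
    rw [le_div_iff₀ (by positivity)] at hγ
    linarith
  obtain rfl : β = 1 - 24 * (γ * L) := by rw [hβ]; ring
  calc lyapunov L κ u' v' w' - lyapunov L κ u v w
      ≤ _ := lyapunov_sub_le_of_recursions hL hκ hdescent hdeviation hdrift
    _ ≤ γ * (-(1 / 4)) * G₀ + -(3 * (γ * L)) / (16 * L) * v
        + κ * (γ * 2 - 2 * (1 - (1 - 24 * (γ * L))) / L) * w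
        + (1 - (1 - 24 * (γ * L))) ^ 2 / L * (P / 16 + 4 * κ * Q)
        + 2 * κ * (1 - (1 - 24 * (γ * L))) / L * G ^ 2 := by
      gcongr
      · exact gradient_coeff_le hx₀ hx
      · exact deviation_coeff_le hx₀ hx
      · exact drift_coeff_le hx₀ hx
    _ = _ := by field_simp; ring

end

/-- One-step Lyapunov decrease of the CafCor analysis: combining the descent (R1),
momentum-deviation (R2) and momentum-drift (R3) recursions with
`V := u + v/(16L) + 2κw/L`. -/
theorem stmt_14 (L κ P Q G γ : ℝ) (hL : 0 < L) (hκ : 0 ≤ κ) (hP : 0 ≤ P) (hQ : 0 ≤ Q)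
    (hG : 0 ≤ G) (hγ0 : 0 < γ) (hγ : γ ≤ 1 / (24 * L))
    (β : ℝ) (hβ : β = 1 - 24 * L * γ)
    (u v w G₀ u' v' w' : ℝ)
    (hu : 0 ≤ u) (hv : 0 ≤ v) (hw : 0 ≤ w) (hG₀ : 0 ≤ G₀)
    (hu' : 0 ≤ u') (hv' : 0 ≤ v') (hw' : 0 ≤ w')
    (hR1 : u' ≤ u - (γ / 2) * (1 - 4 * γ * L) * G₀ + γ * (1 + 2 * γ * L) * v
      + γ * (1 + γ * L) * κ * w)
    (hR2 : v' ≤ β ^ 2 * (1 + γ * L) * (1 + 4 * γ * L) * v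
      + 4 * γ * L * (1 + γ * L) * β ^ 2 * G₀ + (1 - β) ^ 2 * P
      + 2 * γ * L * (1 + γ * L) * β ^ 2 * κ * w)
    (hR3 : w' ≤ β * w + 2 * (1 - β) ^ 2 * Q + (1 - β) * G ^ 2) :
    (u' + v' / (16 * L) + 2 * κ * w' / L) - (u + v / (16 * L) + 2 * κ * w / L)
      ≤ -(γ / 10) * G₀ - (γ / 16) * v - 12 * κ * γ * w
        + 576 * L * γ ^ 2 * (P / 16 + 4 * κ * Q) + 48 * κ * γ * G ^ 2 := by
  refine (stmt_14_general hL hκ hγ0.le hγ hβ hv hw hG₀ hR1 hR2 hR3).trans ?_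
  linarith [mul_nonneg hγ0.le hG₀, mul_nonneg hγ0.le hv, mul_nonneg (mul_nonneg hκ hγ0.le) hw]
end

section
/- Fix reals L > 0, 0 < μ ≤ L, κ ≥ 0, P ≥ 0, Q ≥ 0, G ≥ 0, an integer T ≥ 1, and nonnegative real sequences (u_t), (v_t), (w_t), (G_t) for t = 0, …, T with w_0 = 0, v_0 ≤ 2L u_0, and G_t ≥ 2μ u_t for all t. Define γ_t := 10/(μ(t + 240 L/μ)) and β_t := 1 − 24 L γ_t, and suppose that for every t < T: (R1) u_{t+1} ≤ u_t − (γ_t/2)(1 − 4γ_t L) G_t + γ_t (1 + 2γ_t L) v_t + γ_t (1 + γ_t L) κ w_t; (R2) v_{t+1} ≤ β_t²(1 + γ_t L)(1 + 4γ_t L) v_t + 4γ_t L (1 + γ_t L) β_t² G_t + (1 − β_t)² P + 2γ_t L (1 + γ_t L) β_t² κ w_t; (R3) w_{t+1} ≤ β_t w_t + 2(1 − β_t)² Q + (1 − β_t) G². Then, setting σ̄² := P + 4κQ, one has u_T ≤ 960 κ G² / μ + 115200 L σ̄² / (μ² T) + 115200 L² u_0 / (μ² T²). -/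
/-!
The Lyapunov function `Λ = L u + (v + κ w) / 16` absorbs the three coupled recursions into one.
Writing `x = γ L ≤ 1/24`, the momentum factor `1 - 24 x` shrinks `v + κ w` fast enough to pay for
the terms `γ v + γ κ w` that the descent step injects, while the gradient term that (R2) feeds back
costs only part of the descent; a quarter of `x G_t` remains, which the PL inequality turns into
contraction of `u`. Hence `Λ' ≤ (1 - μ γ / 2) Λ + 3/2 x κ G² + 36 x² (P + 2 κ Q)`. With
`γ = 10 / (μ s)` and `s = t + 240 L / μ` this reads `Λ' ≤ (1 - 5 / s) Λ + O(1 / s) + O(1 / s²)`,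
whose solution is bounded by `A + B / s + C / s²`.
-/

namespace CafCor

section ScalarRecursion

lemma one_sub_div_mul_inv_pow_le {s c : ℝ} {p : ℕ} (hs : 0 < s) (hpc : p ≤ c) :
    (1 - c / s) * (s ^ p)⁻¹ ≤ ((s + 1) ^ p)⁻¹ := by
  have hinv : (s + 1)⁻¹ ≤ 1 := inv_le_one_of_one_le₀ (by linarith)
  have bernoulli : 1 - c / s ≤ (s / (s + 1)) ^ p :=
    calc 1 - c / s
        ≤ 1 - p / s := by gcongr
      _ ≤ 1 - p / (s + 1) := by gcongr; linarith
      _ = 1 + p * (-(s + 1)⁻¹) := by ring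
      _ ≤ (1 + -(s + 1)⁻¹) ^ p := one_add_mul_le_pow (by linarith) p
      _ = (s / (s + 1)) ^ p := by congr 1; field_simp; ring
  calc (1 - c / s) * (s ^ p)⁻¹
      ≤ (s / (s + 1)) ^ p * (s ^ p)⁻¹ := by gcongr
    _ = ((s + 1) ^ p)⁻¹ := by rw [div_pow]; field_simp

lemma recursion_step_le {s c A B C V V' : ℝ} {p : ℕ} (hs : 0 < s) (hcs : c ≤ s) (hpc : p ≤ c)
    (hB : 0 ≤ B) (hC : 0 ≤ C) (hV : V ≤ A + B / s + C / s ^ p)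
    (hV' : V' ≤ (1 - c / s) * V + c * A / s + (c - 1) * B / s ^ 2) :
    V' ≤ A + B / (s + 1) + C / (s + 1) ^ p := by
  have hfactor : 0 ≤ 1 - c / s := sub_nonneg.2 ((div_le_one hs).2 hcs)
  have hinv : (1 - 1 / s) * s⁻¹ ≤ (s + 1)⁻¹ := by
    simpa only [pow_one] using one_sub_div_mul_inv_pow_le (p := 1) hs Nat.cast_one.le
  calc V' ≤ (1 - c / s) * V + c * A / s + (c - 1) * B / s ^ 2 := hV'
    _ ≤ (1 - c / s) * (A + B / s + C / s ^ p) + c * A / s + (c - 1) * B / s ^ 2 := by gcongr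
    _ = A + B * ((1 - 1 / s) * s⁻¹) + C * ((1 - c / s) * (s ^ p)⁻¹) := by field_simp; ring
    _ ≤ A + B * (s + 1)⁻¹ + C * ((s + 1) ^ p)⁻¹ := by
      gcongr
      exact one_sub_div_mul_inv_pow_le hs hpc
    _ = A + B / (s + 1) + C / (s + 1) ^ p := by simp only [div_eq_mul_inv]

lemma recursion_le {s₀ c A B C : ℝ} {p T : ℕ} {V : ℕ → ℝ} (hs₀ : 0 < s₀) (hcs : c ≤ s₀)
    (hpc : p ≤ c) (hB : 0 ≤ B) (hC : 0 ≤ C) (hV₀ : V 0 ≤ A + B / s₀ + C / s₀ ^ p)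
    (hV : ∀ t < T, V (t + 1) ≤
      (1 - c / (t + s₀)) * V t + c * A / (t + s₀) + (c - 1) * B / (t + s₀) ^ 2) :
    ∀ t ≤ T, V t ≤ A + B / (t + s₀) + C / (t + s₀) ^ p := by
  intro t ht
  induction t with
  | zero => simpa using hV₀
  | succ t ih =>
    rw [Nat.cast_succ, add_right_comm (t : ℝ)]
    exact recursion_step_le (by linarith) (by linarith) hpc hB hC (ih (by lia)) (hV t ht)

end ScalarRecursion

section Coefficients

variable {x : ℝ}

lemma sq_momentum_mul_le (hx₀ : 0 ≤ x) (hx : x ≤ 1 / 24) :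
    (1 - 24 * x) ^ 2 * (1 + x) * (1 + 4 * x) ≤ 1 - 24 * x := by
  have hβ : 0 ≤ 1 - 24 * x := by linarith
  have hgrowth : (1 - 24 * x) * ((1 + x) * (1 + 4 * x)) ≤ 1 := by nlinarith [sq_nonneg x]
  linarith [mul_le_mul_of_nonneg_left hgrowth hβ]

lemma sq_momentum_mul_one_add_le_one (hx₀ : 0 ≤ x) (hx : x ≤ 1 / 24) :
    (1 + x) * (1 - 24 * x) ^ 2 ≤ 1 := by
  have : 0 ≤ (1 - 24 * x) ^ 2 * (1 + x) * (4 * x) := by positivity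
  linarith [sq_momentum_mul_le hx₀ hx]

lemma gradient_coeff_le (hx₀ : 0 ≤ x) (hx : x ≤ 1 / 24) :
    4 * x * (1 + x) * (1 - 24 * x) ^ 2 / 16 - x / 2 * (1 - 4 * x) ≤ -(x / 4) := by
  have hβ : (1 - 24 * x) * (1 + x) ≤ 1 - 8 * x := by nlinarith
  have hβ' := mul_le_mul_of_nonneg_left hβ (by linarith : 0 ≤ 1 - 24 * x)
  nlinarith [mul_le_mul_of_nonneg_left hβ' hx₀]

lemma deviation_coeff_le (hx₀ : 0 ≤ x) (hx : x ≤ 1 / 24) :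
    x * (1 + 2 * x) + (1 - 24 * x) ^ 2 * (1 + x) * (1 + 4 * x) / 16 ≤ (1 - x / 2) / 16 := by
  nlinarith [sq_momentum_mul_le hx₀ hx]

lemma drift_coeff_le (hx₀ : 0 ≤ x) (hx : x ≤ 1 / 24) :
    x * (1 + x) + 2 * x * (1 + x) * (1 - 24 * x) ^ 2 / 16 + (1 - 24 * x) / 16
      ≤ (1 - x / 2) / 16 := by
  nlinarith [mul_le_mul_of_nonneg_left (sq_momentum_mul_one_add_le_one hx₀ hx) hx₀]

end Coefficients

/-- One step of the recursions (R1)–(R3) with step size `γ` and momentum `β`, from the state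
`(u, v, w)` with squared gradient norm `g` to the state `(u', v', w')`; `H` stands for the squared
heterogeneity constant `G²`. -/
structure Step (L κ P Q H γ β u v w g u' v' w' : ℝ) : Prop where
  gap_le : u' ≤ u - (γ / 2) * (1 - 4 * γ * L) * g + γ * (1 + 2 * γ * L) * v
    + γ * (1 + γ * L) * κ * w
  deviation_le : v' ≤ β ^ 2 * (1 + γ * L) * (1 + 4 * γ * L) * v
    + 4 * γ * L * (1 + γ * L) * β ^ 2 * g + (1 - β) ^ 2 * P
    + 2 * γ * L * (1 + γ * L) * β ^ 2 * κ * w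
  drift_le : w' ≤ β * w + 2 * (1 - β) ^ 2 * Q + (1 - β) * H

/-- The Lyapunov function of the recursions. The weight `1/16` is small enough for the gradient
term of (R2) to be covered by the descent in (R1), and large enough for the decay of `v + κ w` to
cover their contribution to (R1). -/
noncomputable def lyapunov (L κ u v w : ℝ) : ℝ := L * u + (v + κ * w) / 16

section Lyapunov

variable {L μ κ P Q H γ u v w g u' v' w' : ℝ}

lemma gap_le_div_of_lyapunov_le {A : ℝ} (hL : 0 < L) (hκ : 0 ≤ κ) (hv : 0 ≤ v)
    (hw : 0 ≤ w) (h : lyapunov L κ u v w ≤ A) : u ≤ A / L := by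
  rw [le_div_iff₀' hL]
  have : 0 ≤ (v + κ * w) / 16 := by positivity
  unfold lyapunov at h
  linarith

lemma Step.lyapunov_le_sub_gradient (h : Step L κ P Q H γ (1 - 24 * L * γ) u v w g u' v' w')
    (hL : 0 ≤ L) (hκ : 0 ≤ κ) (hγ : 0 ≤ γ) (hγL : γ * L ≤ 1 / 24)
    (hv : 0 ≤ v) (hw : 0 ≤ w) (hg : 0 ≤ g) :
    lyapunov L κ u' v' w' ≤ L * u - γ * L / 4 * g + (1 - γ * L / 2) * ((v + κ * w) / 16)
      + 3 / 2 * (γ * L) * (κ * H) + 36 * (γ * L) ^ 2 * (P + 2 * κ * Q) := by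
  have hx₀ : 0 ≤ γ * L := by positivity
  have gap_le := mul_le_mul_of_nonneg_left h.gap_le hL
  have drift_le := mul_le_mul_of_nonneg_left h.drift_le hκ
  have gradient_le := mul_le_mul_of_nonneg_right (gradient_coeff_le hx₀ hγL) hg
  have v_le := mul_le_mul_of_nonneg_right (deviation_coeff_le hx₀ hγL) hv
  have w_le := mul_le_mul_of_nonneg_right (drift_coeff_le hx₀ hγL) (mul_nonneg hκ hw)
  unfold lyapunov
  linarith [h.deviation_le]

lemma Step.lyapunov_le (h : Step L κ P Q H γ (1 - 24 * L * γ) u v w g u' v' w')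
    (hL : 0 ≤ L) (hμL : μ ≤ L) (hκ : 0 ≤ κ) (hγ : 0 ≤ γ) (hγL : γ * L ≤ 1 / 24)
    (hv : 0 ≤ v) (hw : 0 ≤ w) (hg : 0 ≤ g) (hPL : 2 * μ * u ≤ g) :
    lyapunov L κ u' v' w' ≤ (1 - γ * μ / 2) * lyapunov L κ u v w
      + 3 / 2 * (γ * L) * (κ * H) + 36 * (γ * L) ^ 2 * (P + 2 * κ * Q) := by
  have gap_contraction : L * u - γ * L / 4 * g ≤ (1 - γ * μ / 2) * (L * u) := by
    linarith [mul_le_mul_of_nonneg_left hPL (by positivity : 0 ≤ γ * L / 4)]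
  have momentum_contraction : (1 - γ * L / 2) * ((v + κ * w) / 16)
      ≤ (1 - γ * μ / 2) * ((v + κ * w) / 16) := by gcongr
  have hstep := h.lyapunov_le_sub_gradient hL hκ hγ hγL hv hw hg
  unfold lyapunov at hstep ⊢
  linarith

end Lyapunov

/-- The step sizes `γ_t = 10 / (μ (t + 240 L / μ))`; the shift `240 L / μ` makes `γ_t L ≤ 1/24`. -/
noncomputable def stepSize (L μ : ℝ) (t : ℕ) : ℝ := 10 / (μ * (t + 240 * L / μ))

section Convergence

variable {L μ κ P Q H : ℝ} {T : ℕ} {u v w g : ℕ → ℝ}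

lemma stepSize_nonneg (hL : 0 ≤ L) (hμ : 0 ≤ μ) (t : ℕ) : 0 ≤ stepSize L μ t := by
  unfold stepSize; positivity

lemma stepSize_mul_le (hL : 0 < L) (hμ : 0 < μ) (t : ℕ) : stepSize L μ t * L ≤ 1 / 24 :=
  calc 10 / (μ * (t + 240 * L / μ)) * L
      ≤ 10 / (μ * (0 + 240 * L / μ)) * L := by gcongr; exact t.cast_nonneg
    _ = 1 / 24 := by field_simp; ring

lemma lyapunov_zero_drift_le {u v : ℝ} (hL : 0 < L) (hμ : 0 < μ) (hv : v ≤ 2 * L * u) :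
    lyapunov L κ u v 0 ≤ 64800 * L ^ 3 * u / μ ^ 2 / (240 * L / μ) ^ 2 :=
  calc lyapunov L κ u v 0 = L * u + v / 16 := by rw [lyapunov, mul_zero, add_zero]
    _ ≤ 9 / 8 * L * u := by linarith
    _ = 64800 * L ^ 3 * u / μ ^ 2 / (240 * L / μ) ^ 2 := by field_simp; ring

lemma lyapunov_le (hL : 0 < L) (hμ : 0 < μ) (hμL : μ ≤ L) (hκ : 0 ≤ κ) (hH : 0 ≤ H)
    (hσ : 0 ≤ P + 2 * κ * Q) (hu₀ : 0 ≤ u 0) (hw₀ : w 0 = 0) (hv₀ : v 0 ≤ 2 * L * u 0)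
    (hv : ∀ t < T, 0 ≤ v t) (hw : ∀ t < T, 0 ≤ w t) (hg : ∀ t < T, 0 ≤ g t)
    (hPL : ∀ t < T, 2 * μ * u t ≤ g t)
    (hstep : ∀ t < T, Step L κ P Q H (stepSize L μ t) (1 - 24 * L * stepSize L μ t)
      (u t) (v t) (w t) (g t) (u (t + 1)) (v (t + 1)) (w (t + 1))) :
    ∀ t ≤ T, lyapunov L κ (u t) (v t) (w t) ≤ 3 * L * (κ * H) / μ
      + 900 * L ^ 2 * (P + 2 * κ * Q) / μ ^ 2 / (t + 240 * L / μ)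
      + 64800 * L ^ 3 * u 0 / μ ^ 2 / (t + 240 * L / μ) ^ 2 := by
  -- With `x = 10 L / (μ s)`, the three constants `A`, `B`, `C` of the bound are determined by
  -- `5 A / s = 3/2 x κ H`, `4 B / s² = 36 x² (P + 2 κ Q)` and `C / s₀² = 9/8 L u₀`.
  have hshift : 5 ≤ 240 * L / μ := by rw [le_div_iff₀ hμ]; linarith
  refine recursion_le (c := 5) (V := fun t ↦ lyapunov L κ (u t) (v t) (w t)) (by positivity)
    hshift (by norm_num) (by positivity) (by positivity) ?_ fun t ht ↦ ?_
  · rw [hw₀]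
    exact (lyapunov_zero_drift_le hL hμ hv₀).trans (le_add_of_nonneg_left (by positivity))
  · refine ((hstep t ht).lyapunov_le hL.le hμL hκ (stepSize_nonneg hL.le hμ.le t)
      (stepSize_mul_le hL hμ t) (hv t ht) (hw t ht) (hg t ht) (hPL t ht)).trans_eq ?_
    have hs : (t : ℝ) + 240 * L / μ ≠ 0 := by positivity
    unfold stepSize
    generalize (t : ℝ) + 240 * L / μ = s at hs
    field_simp
    ring

end Convergence

end CafCor

/-- Convergence of the CafCor recursions in the strongly convex case: with the step sizes
`γ t = 10/(μ(t + 240 L/μ))` and momentum `β t = 1 − 24 L γ t`, the recursions (R1)–(R3)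
together with the PL inequality `G t ≥ 2 μ u t` yield
`u T ≤ 960 κ G²/μ + 115200 L σ̄²/(μ² T) + 115200 L² u 0/(μ² T²)` where `σ̄² = P + 4κQ`. -/
theorem stmt_15 (L μ κ P Q G : ℝ) (hL : 0 < L) (hμ0 : 0 < μ) (hμL : μ ≤ L)
    (hκ : 0 ≤ κ) (hP : 0 ≤ P) (hQ : 0 ≤ Q) (hG : 0 ≤ G)
    (T : ℕ) (hT : 1 ≤ T)
    (u v w Gs : ℕ → ℝ)
    (hu : ∀ t ≤ T, 0 ≤ u t) (hv : ∀ t ≤ T, 0 ≤ v t) (hw : ∀ t ≤ T, 0 ≤ w t)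
    (hGs : ∀ t ≤ T, 0 ≤ Gs t)
    (hw0 : w 0 = 0) (hv0 : v 0 ≤ 2 * L * u 0)
    (hPL : ∀ t ≤ T, 2 * μ * u t ≤ Gs t)
    (γ β : ℕ → ℝ)
    (hγ : ∀ t, γ t = 10 / (μ * ((t : ℝ) + 240 * L / μ)))
    (hβ : ∀ t, β t = 1 - 24 * L * γ t)
    (hR1 : ∀ t < T, u (t + 1) ≤ u t - (γ t / 2) * (1 - 4 * γ t * L) * Gs t
      + γ t * (1 + 2 * γ t * L) * v t + γ t * (1 + γ t * L) * κ * w t)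
    (hR2 : ∀ t < T, v (t + 1) ≤ (β t) ^ 2 * (1 + γ t * L) * (1 + 4 * γ t * L) * v t
      + 4 * γ t * L * (1 + γ t * L) * (β t) ^ 2 * Gs t + (1 - β t) ^ 2 * P
      + 2 * γ t * L * (1 + γ t * L) * (β t) ^ 2 * κ * w t)
    (hR3 : ∀ t < T, w (t + 1) ≤ β t * w t + 2 * (1 - β t) ^ 2 * Q + (1 - β t) * G ^ 2) :
    u T ≤ 960 * κ * G ^ 2 / μ + 115200 * L * (P + 4 * κ * Q) / (μ ^ 2 * T)
      + 115200 * L ^ 2 * u 0 / (μ ^ 2 * (T : ℝ) ^ 2) := by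
  obtain rfl : γ = CafCor.stepSize L μ := funext hγ
  obtain rfl : β = fun t ↦ 1 - 24 * L * CafCor.stepSize L μ t := funext hβ
  have hu₀ : 0 ≤ u 0 := hu 0 T.zero_le
  have : (0 : ℝ) < T := by exact_mod_cast hT
  have hTs : (T : ℝ) ≤ T + 240 * L / μ := le_add_of_nonneg_right (by positivity)
  have hΛ := CafCor.lyapunov_le hL hμ0 hμL hκ (sq_nonneg G) (by positivity) hu₀ hw0 hv0
    (fun t ht ↦ hv t ht.le) (fun t ht ↦ hw t ht.le) (fun t ht ↦ hGs t ht.le)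
    (fun t ht ↦ hPL t ht.le) (fun t ht ↦ ⟨hR1 t ht, hR2 t ht, hR3 t ht⟩) T le_rfl
  calc u T
      ≤ _ := CafCor.gap_le_div_of_lyapunov_le hL hκ (hv T le_rfl) (hw T le_rfl) hΛ
    _ = 3 * κ * G ^ 2 / μ + 900 * L * (P + 2 * κ * Q) / (μ ^ 2 * (T + 240 * L / μ))
        + 64800 * L ^ 2 * u 0 / (μ ^ 2 * (T + 240 * L / μ) ^ 2) := by field_simp
    _ ≤ _ := by gcongr <;> norm_num
end
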